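/- There is an absolute constant C > 0 such that the following holds. Let f : {0,1}^n → ℝ be a function (multilinear polynomial) with sparsity spar(f) = r ≥ 2 and monotone block sensitivity MBS(f) ≤ m. Then for every z ∈ {0,1}^n, the family W(f,z) = {w ⊆ [n]∖z : f(z ∨ w) ≠ f(z)} has a hitting set of size at most C·m²·log₂ r; that is, HSC(f) = O(m²·log r). -/

import Mathlib

/-- The coefficient of the monomial `s` in the unique multilinear polynomial computing
`f : {0,1}^n → ℝ` (subsets of `Fin n` identified with points of the cube),
given by Möbius inversion. -/
noncomputable def coeff {n : ℕ} (f : Finset (Fin n) → ℝ) (s : Finset (Fin n)) : ℝ :=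
  ∑ t ∈ s.powerset, (-1 : ℝ) ^ (s.card - t.card) * f t

/-- The sparsity of `f`: the number of nonzero coefficients. -/
noncomputable def sparsity {n : ℕ} (f : Finset (Fin n) → ℝ) : ℕ :=
  {s : Finset (Fin n) | coeff f s ≠ 0}.ncard

/-- The set system of non-constant monomials of `f`. -/
def mon {n : ℕ} (f : Finset (Fin n) → ℝ) : Set (Finset (Fin n)) :=
  {s | coeff f s ≠ 0 ∧ s ≠ ∅}

/-- `W f z`: the family of sets `w ⊆ [n] ∖ z` such that `f (z ∨ w) ≠ f z`. -/
def W {n : ℕ} (f : Finset (Fin n) → ℝ) (z : Finset (Fin n)) : Set (Finset (Fin n)) :=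
  {w | w ⊆ zᶜ ∧ f (z ∪ w) ≠ f z}

/-!
A *fractional* hitting set puts nonnegative weights on `[n]` that give every `w ∈ W(f,z)` mass at
least `1`. Suppose every `W(f,y)` has one of weight `2K` while `W(f,z)` has none of weight `K`. By
linear programming duality there is a probability distribution on `W(f,z)` under which each point of
`[n]` is covered with probability at most `1/K`. Take `2(m+1)` independent samples from it, let `u`
be the set of points covered at least twice, and for each sample `w` let `u_w` be the set of points
covered at least twice by the other samples, so that `w ∨ u = w ∨ u_w` and `u_w` is independent of
`w`. The expected mass of `u` under the weights of `W(f,z)`, and of `u_w` under those of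
`W(f, z ∨ w)`, is so small when `K ≥ 32(m+1)²` that for some outcome `f(z ∨ u) = f(z)`, and
`f(z ∨ u ∨ w) = f(z ∨ w) ≠ f(z)` for more than `m` of the samples `w`. Their differences `w ∖ u` are
disjoint sensitive blocks at `z ∨ u`, contradicting `MBS(f) ≤ m`. Hence the weight can be halved,
simultaneously for all `z`, until it is `32(m+1)²`.

Every member of `W(f,z)` contains a member of the form `s ∖ z` with `s` a monomial of `f`. There are
at most `spar(f)` of these, so the greedy algorithm turns the fractional hitting set into a hitting
set at the cost of a factor `log spar(f)`.
-/

open Finset Matrix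

section Minimax

variable {ι κ : Type*} [Fintype ι] [Fintype κ]

theorem nonneg_of_forall_le_dotProduct_lt {e : κ → ℝ} {c u : ℝ}
    (he : ∀ v : κ → ℝ, (∀ j, v j ≤ c) → e ⬝ᵥ v < u) : 0 ≤ e := by
  classical
  intro j
  by_contra! hj
  have hconst : e ⬝ᵥ (fun _ ↦ c) < u := he _ fun _ ↦ le_rfl
  have hslope : 0 ≤ (e ⬝ᵥ (fun _ ↦ c) - u) / e j :=
    div_nonneg_of_nonpos (sub_neg.2 hconst).le hj.le
  have hlt := he ((fun _ ↦ c) - Pi.single j ((e ⬝ᵥ (fun _ ↦ c) - u) / e j)) fun k ↦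
    sub_le_self c (Pi.single_nonneg (α := fun _ ↦ ℝ).2 hslope k)
  rw [dotProduct_sub, dotProduct_single, mul_div_cancel₀ _ hj.ne, sub_sub_cancel] at hlt
  exact hlt.false

theorem inv_sum_smul_mem_stdSimplex {e : κ → ℝ} (he : 0 ≤ e) (hsum : 0 < ∑ j, e j) :
    (∑ j, e j)⁻¹ • e ∈ stdSimplex ℝ κ := by
  refine ⟨fun j ↦ mul_nonneg (inv_nonneg.2 hsum.le) (he j), ?_⟩
  simp only [Pi.smul_apply, smul_eq_mul, ← mul_sum, inv_mul_cancel₀ hsum.ne']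

theorem exists_vecMul_le_or_exists_lt_mulVec [Nonempty ι] (A : Matrix ι κ ℝ) (c : ℝ) :
    (∃ p ∈ stdSimplex ℝ ι, ∀ j, (p ᵥ* A) j ≤ c) ∨
      ∃ q ∈ stdSimplex ℝ κ, ∀ i, c < (A *ᵥ q) i := by
  classical
  refine or_iff_not_imp_left.2 fun hA ↦ ?_
  have hdisj : Disjoint {v : κ → ℝ | ∀ j, v j ≤ c} (A.vecMulLinear '' stdSimplex ℝ ι) := by
    rw [Set.disjoint_right]
    rintro _ ⟨p, hp, rfl⟩ hle
    exact hA ⟨p, hp, hle⟩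
  obtain ⟨g, u, v, hgu, huv, hgv⟩ := geometric_hahn_banach_closed_compact
    (convex_Iic fun _ : κ ↦ c) isClosed_Iic
    ((convex_stdSimplex ℝ ι).linear_image A.vecMulLinear)
    ((isCompact_stdSimplex ℝ ι).image A.vecMulLinear.continuous_of_finiteDimensional) hdisj
  set e : κ → ℝ := fun j ↦ g (Pi.single j 1) with he
  have hg (x : κ → ℝ) : g x = e ⬝ᵥ x := by
    conv_lhs => rw [pi_eq_sum_univ' x, map_sum]
    simp [dotProduct, he, mul_comm]
  simp only [hg] at hgu hgv
  have he_nonneg : 0 ≤ e := nonneg_of_forall_le_dotProduct_lt hgu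
  have hrow (i : ι) : c * ∑ j, e j < (A *ᵥ e) i := calc
    c * ∑ j, e j = e ⬝ᵥ (fun _ ↦ c) := by rw [dotProduct, mul_comm, sum_mul]
    _ < u := hgu _ fun _ ↦ le_rfl
    _ < v := huv
    _ < e ⬝ᵥ A.row i := by
      simpa using hgv _ ⟨Pi.single i 1, single_mem_stdSimplex ℝ i, rfl⟩
    _ = (A *ᵥ e) i := dotProduct_comm _ _
  have hsum_pos : 0 < ∑ j, e j := by
    refine (sum_nonneg fun j _ ↦ he_nonneg j).lt_of_ne' fun hzero ↦ ?_
    have he_zero : e = 0 := (Fintype.sum_eq_zero_iff_of_nonneg he_nonneg).1 hzero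
    simpa [he_zero] using hrow (Classical.arbitrary ι)
  refine ⟨(∑ j, e j)⁻¹ • e, inv_sum_smul_mem_stdSimplex he_nonneg hsum_pos, fun i ↦ ?_⟩
  rw [mulVec_smul, Pi.smul_apply, smul_eq_mul, lt_inv_mul_iff₀ hsum_pos, mul_comm]
  exact hrow i

end Minimax

section Probability

variable {ι κ : Type*} [Fintype ι] [Fintype κ]

theorem exists_le_of_stdSimplex_dotProduct_le {μ X : κ → ℝ} (hμ : μ ∈ stdSimplex ℝ κ) {b : ℝ}
    (hX : μ ⬝ᵥ X ≤ b) : ∃ a, X a ≤ b := by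
  obtain ⟨a, -, ha⟩ := (concaveOn_id (convex_univ (𝕜 := ℝ) (E := ℝ))).exists_le_of_centerMass
    (t := univ) (w := μ) (p := X) (fun a _ ↦ hμ.1 a) (hμ.2.symm ▸ one_pos) (fun _ _ ↦ trivial)
  rw [univ.centerMass_eq_of_sum_1 X hμ.2] at ha
  exact ⟨a, ha.trans hX⟩

/-- The joint distribution of independent samples `ω i`, each drawn with probabilities `p`. -/
def iidWeight (p : κ → ℝ) (ω : ι → κ) : ℝ := ∏ i, p (ω i)

theorem iidWeight_mem_stdSimplex [DecidableEq ι] {p : κ → ℝ} (hp : p ∈ stdSimplex ℝ κ) :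
    iidWeight p ∈ stdSimplex ℝ (ι → κ) := by
  refine ⟨fun ω ↦ prod_nonneg fun i _ ↦ hp.1 _, ?_⟩
  simp only [iidWeight, ← Fintype.prod_sum, hp.2, prod_const_one]

theorem iidWeight_dotProduct_resample [DecidableEq ι] {p : κ → ℝ} (hp : p ∈ stdSimplex ℝ κ)
    (i : ι) (X : (ι → κ) → ℝ) :
    iidWeight p ⬝ᵥ X =
      p ⬝ᵥ fun a ↦ iidWeight p ⬝ᵥ fun ω ↦ X (Function.update ω i a) := by
  -- Exchanging `ω i` with a fresh sample preserves the joint distribution.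
  let swap : κ × (ι → κ) → κ × (ι → κ) := fun q ↦ (q.2 i, Function.update q.2 i q.1)
  have swap_involutive : Function.Involutive swap := fun q ↦ by simp [swap]
  have weight_swap (q : κ × (ι → κ)) :
      p (swap q).1 * iidWeight p (swap q).2 = p q.1 * iidWeight p q.2 := by
    have hprod : iidWeight p (swap q).2 = p q.1 * ∏ j ∈ univ \ {i}, p (q.2 j) :=
      (prod_congr rfl fun j _ ↦ Function.apply_update (fun _ ↦ p) q.2 i q.1 j).trans
        (prod_update_of_mem (mem_univ i) _ _)
    rw [hprod, mul_left_comm, iidWeight, prod_eq_mul_prod_sdiff_singleton_of_mem (mem_univ i)]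
  calc iidWeight p ⬝ᵥ X = ∑ q : κ × (ι → κ), p q.1 * iidWeight p q.2 * X q.2 := by
        simp only [Fintype.sum_prod_type, mul_assoc, ← mul_sum, ← sum_mul, hp.2, one_mul,
          dotProduct]
    _ = ∑ q : κ × (ι → κ), p q.1 * iidWeight p q.2 * X (swap q).2 := by
        refine (Equiv.sum_comp swap_involutive.toPerm _).symm.trans (sum_congr rfl fun q _ ↦ ?_)
        rw [Function.Involutive.coe_toPerm, weight_swap]
    _ = _ := by simp only [Fintype.sum_prod_type, mul_assoc, ← mul_sum, dotProduct, swap]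

theorem iidWeight_dotProduct_apply [DecidableEq ι] {p : κ → ℝ} (hp : p ∈ stdSimplex ℝ κ)
    (g : κ → ℝ) (i : ι) : iidWeight p ⬝ᵥ (fun ω ↦ g (ω i)) = p ⬝ᵥ g := by
  rw [iidWeight_dotProduct_resample hp i]
  simp only [Function.update_self, dotProduct, ← sum_mul, (iidWeight_mem_stdSimplex hp).2, one_mul]

theorem iidWeight_dotProduct_mul_apply [DecidableEq ι] {p : κ → ℝ} (hp : p ∈ stdSimplex ℝ κ)
    (g h : κ → ℝ) {i j : ι} (hij : i ≠ j) :
    iidWeight p ⬝ᵥ (fun ω ↦ g (ω i) * h (ω j)) = (p ⬝ᵥ g) * (p ⬝ᵥ h) := by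
  calc iidWeight p ⬝ᵥ (fun ω ↦ g (ω i) * h (ω j)) = p ⬝ᵥ fun a ↦ g a * (p ⬝ᵥ h) := by
        rw [iidWeight_dotProduct_resample hp i, ← iidWeight_dotProduct_apply hp h j]
        simp only [Function.update_self, Function.update_of_ne hij.symm, dotProduct,
          mul_left_comm _ (g _), ← mul_sum]
    _ = (p ⬝ᵥ g) * (p ⬝ᵥ h) := by simp only [dotProduct, ← mul_assoc, ← sum_mul]

end Probability

section Mobius

theorem sum_Icc_neg_one_pow_card_sub {α R : Type*} [DecidableEq α] [Ring R] {t x : Finset α}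
    (h : t ⊆ x) : ∑ s ∈ Icc t x, (-1 : R) ^ (#s - #t) = if t = x then 1 else 0 := by
  have hdisj {a : Finset α} (ha : a ∈ (x \ t).powerset) : Disjoint t a :=
    disjoint_sdiff.mono_right (mem_powerset.1 ha)
  have hinj : Set.InjOn (t ∪ ·) ((x \ t).powerset : Set (Finset α)) := fun a ha b hb hab ↦ by
    rw [← union_sdiff_cancel_left (hdisj ha), ← union_sdiff_cancel_left (hdisj hb)]
    exact congrArg (· \ t) hab
  calc ∑ s ∈ Icc t x, (-1 : R) ^ (#s - #t) = ∑ a ∈ (x \ t).powerset, (-1 : R) ^ #a := by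
        rw [Icc_eq_image_powerset h, sum_image hinj]
        refine sum_congr rfl fun a ha ↦ ?_
        rw [card_union_of_disjoint (hdisj ha), Nat.add_sub_cancel_left]
    _ = if x \ t = ∅ then 1 else 0 := by
        exact_mod_cast congrArg (Int.cast : ℤ → R) sum_powerset_neg_one_pow_card
    _ = if t = x then 1 else 0 := by
        simp only [sdiff_eq_empty_iff_subset, h.ge_iff_eq', eq_comm (a := x)]

variable {n : ℕ} (f : Finset (Fin n) → ℝ)

theorem sum_powerset_coeff (x : Finset (Fin n)) : ∑ s ∈ x.powerset, coeff f s = f x := calc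
  ∑ s ∈ x.powerset, coeff f s
      = ∑ t ∈ x.powerset, ∑ s ∈ Icc t x, (-1) ^ (#s - #t) * f t := by
    refine sum_comm' fun s t ↦ ?_
    simp only [mem_powerset, mem_Icc]
    exact ⟨fun ⟨hsx, hts⟩ ↦ ⟨⟨hts, hsx⟩, hts.trans hsx⟩, fun ⟨⟨hts, hsx⟩, _⟩ ↦ ⟨hsx, hts⟩⟩
  _ = ∑ t ∈ x.powerset, if t = x then f t else 0 := by
    refine sum_congr rfl fun t ht ↦ ?_
    rw [← sum_mul, sum_Icc_neg_one_pow_card_sub (mem_powerset.1 ht), ite_mul, one_mul, zero_mul]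
  _ = f x := by rw [sum_ite_eq' _ x, if_pos (mem_powerset_self x)]

theorem apply_union_eq_sum_powerset (z t : Finset (Fin n)) :
    f (z ∪ t) = ∑ v ∈ t.powerset, ∑ s with s \ z = v, coeff f s := by
  have hmaps : ∀ s ∈ (z ∪ t).powerset, s \ z ∈ t.powerset := fun s hs ↦
    mem_powerset.2 (sdiff_le_iff.2 (mem_powerset.1 hs))
  rw [← sum_powerset_coeff f, ← sum_fiberwise_of_maps_to hmaps]
  refine sum_congr rfl fun v hv ↦ sum_congr ?_ fun _ _ ↦ rfl
  ext s
  simp only [mem_filter, mem_powerset, mem_univ, true_and, and_iff_right_iff_imp]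
  rintro rfl
  exact sdiff_le_iff.1 (mem_powerset.1 hv)

theorem exists_sum_powerset_eq_add {β M : Type*} [AddCommMonoid M] {g : Finset β → M}
    {w : Finset β} (hw : ∑ v ∈ w.powerset, g v ≠ g ∅) :
    ∃ v ⊆ w, g v ≠ 0 ∧ ∑ u ∈ v.powerset, g u = g ∅ + g v := by
  classical
  obtain ⟨v₀, hv₀, hne₀, hg₀⟩ : ∃ v ∈ w.powerset, v ≠ ∅ ∧ g v ≠ 0 := by
    by_contra! hzero
    exact hw (sum_eq_single_of_mem ∅ (empty_mem_powerset w) fun v hv hne ↦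
      hzero v hv (nonempty_iff_ne_empty.2 hne))
  -- For an inclusion-minimal `v`, only `∅` and `v` itself contribute to the sum over subsets.
  obtain ⟨v, hvv₀, ⟨hne, hg⟩, hmin⟩ :=
    exists_minimal_le_of_wellFoundedLT (fun v ↦ v ≠ ∅ ∧ g v ≠ 0) v₀ ⟨hne₀, hg₀⟩
  refine ⟨v, hvv₀.trans (mem_powerset.1 hv₀), hg, ?_⟩
  refine (sum_subset ?_ fun u hu hu' ↦ ?_).symm.trans (sum_pair hne.symm)
  · simp [insert_subset_iff]
  · by_contra hgu
    simp only [mem_insert, mem_singleton, not_or] at hu'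
    exact hu'.2 ((mem_powerset.1 hu).antisymm (hmin ⟨hu'.1, hgu⟩ (mem_powerset.1 hu)))

variable {f}

theorem exists_coeff_ne_zero_sdiff_mem_W {z w : Finset (Fin n)} (hw : w ∈ W f z) :
    ∃ s, coeff f s ≠ 0 ∧ s \ z ⊆ w ∧ s \ z ∈ W f z := by
  let g (v : Finset (Fin n)) : ℝ := ∑ s with s \ z = v, coeff f s
  have hg (t) : f (z ∪ t) = ∑ v ∈ t.powerset, g v := apply_union_eq_sum_powerset f z t
  have hg_empty : g ∅ = f z := by simpa using (hg ∅).symm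
  obtain ⟨v, hvw, hgv, hsum⟩ : ∃ v ⊆ w, g v ≠ 0 ∧ ∑ u ∈ v.powerset, g u = g ∅ + g v :=
    exists_sum_powerset_eq_add (by rw [← hg, hg_empty]; exact hw.2)
  obtain ⟨s, hs, hcoeff⟩ := exists_ne_zero_of_sum_ne_zero hgv
  obtain rfl : s \ z = v := (mem_filter.1 hs).2
  refine ⟨s, hcoeff, hvw, hvw.trans hw.1, ?_⟩
  rw [hg, hsum, hg_empty]
  exact add_ne_left.2 hgv

end Mobius

section FractionalHittingSet

variable {α : Type*} [Fintype α]

/-- Nonnegative weights of total mass at most `K` that give every member of `F` mass at least `1`: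
the linear-programming relaxation of a hitting set of size at most `K`. -/
structure IsFractionalHittingSet (F : Set (Finset α)) (K : ℝ) (c : α → ℝ) : Prop where
  nonneg : 0 ≤ c
  sum_le : ∑ x, c x ≤ K
  one_le_sum : ∀ w ∈ F, 1 ≤ ∑ x ∈ w, c x

variable {F : Set (Finset α)} {K : ℝ} {c : α → ℝ}

theorem isFractionalHittingSet_one (hF : ∀ w ∈ F, w.Nonempty) :
    IsFractionalHittingSet F (Fintype.card α) 1 where
  nonneg := zero_le_one
  sum_le := by simp
  one_le_sum w hw := by simpa [Nat.one_le_cast] using hF w hw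

namespace IsFractionalHittingSet

theorem mono (hc : IsFractionalHittingSet F K c) {F' : Set (Finset α)} {K' : ℝ} (hF : F' ⊆ F)
    (hK : K ≤ K') : IsFractionalHittingSet F' K' c :=
  ⟨hc.nonneg, hc.sum_le.trans hK, fun w hw ↦ hc.one_le_sum w (hF hw)⟩

theorem weight_nonneg (hc : IsFractionalHittingSet F K c) : 0 ≤ K :=
  (sum_nonneg fun x _ ↦ hc.nonneg x).trans hc.sum_le

theorem one_le_weight (hc : IsFractionalHittingSet F K c) (hF : F.Nonempty) : 1 ≤ K := by
  obtain ⟨w, hw⟩ := hF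
  calc 1 ≤ ∑ x ∈ w, c x := hc.one_le_sum w hw
    _ ≤ ∑ x, c x := sum_le_univ_sum_of_nonneg hc.nonneg
    _ ≤ K := hc.sum_le

end IsFractionalHittingSet

theorem exists_stdSimplex_of_forall_not_isFractionalHittingSet [DecidableEq α] [Fintype F]
    (hK : 0 < K) (hF : ∀ c, ¬ IsFractionalHittingSet F K c) :
    ∃ p ∈ stdSimplex ℝ F, ∀ x, p ⬝ᵥ (fun w ↦ if x ∈ w.1 then 1 else 0) ≤ K⁻¹ := by
  have : Nonempty F := by
    by_contra hempty
    refine hF 0 ⟨le_rfl, by simpa using hK.le, fun w hw ↦ (hempty ⟨w, hw⟩).elim⟩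
  refine (exists_vecMul_le_or_exists_lt_mulVec
    (Matrix.of fun (w : F) (x : α) ↦ if x ∈ w.1 then (1 : ℝ) else 0) K⁻¹).resolve_right ?_
  rintro ⟨q, ⟨hq_nonneg, hq_sum⟩, hq⟩
  refine hF (K • q) ⟨smul_nonneg hK.le hq_nonneg, ?_, fun w hw ↦ ?_⟩
  · simp only [Pi.smul_apply, smul_eq_mul, ← mul_sum, hq_sum, mul_one, le_rfl]
  · have hlt : K⁻¹ < ∑ x ∈ w, q x := by simpa [mulVec, dotProduct] using hq ⟨w, hw⟩
    simpa only [Pi.smul_apply, smul_eq_mul, mul_sum] using ((inv_lt_iff_one_lt_mul₀' hK).1 hlt).le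

end FractionalHittingSet

section Greedy

variable {α : Type*} [Fintype α] [DecidableEq α] {K : ℝ} {c : α → ℝ}

namespace IsFractionalHittingSet

theorem exists_card_le_mul_card_filter_mem {U : Finset (Finset α)} (hU : U.Nonempty)
    (hc : IsFractionalHittingSet (U : Set (Finset α)) K c) :
    ∃ x, (#U : ℝ) ≤ K * #{w ∈ U | x ∈ w} := by
  obtain ⟨w₀, hw₀⟩ := hU
  obtain ⟨y, -⟩ : w₀.Nonempty :=
    nonempty_of_sum_ne_zero (one_pos.trans_le (hc.one_le_sum w₀ hw₀)).ne'
  obtain ⟨x₀, -, hmax⟩ := exists_max_image univ (fun x ↦ #{w ∈ U | x ∈ w}) ⟨y, mem_univ y⟩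
  refine ⟨x₀, ?_⟩
  calc (#U : ℝ) = ∑ w ∈ U, 1 := by simp
    _ ≤ ∑ w ∈ U, ∑ x ∈ w, c x := sum_le_sum hc.one_le_sum
    _ = ∑ x, c x * #{w ∈ U | x ∈ w} := by
        rw [sum_comm' (t' := univ) (s' := fun x ↦ {w ∈ U | x ∈ w}) (by simp)]
        simp only [sum_const, nsmul_eq_mul, mul_comm]
    _ ≤ ∑ x, c x * #{w ∈ U | x₀ ∈ w} := by
        refine sum_le_sum fun x _ ↦ mul_le_mul_of_nonneg_left ?_ (hc.nonneg x)
        exact Nat.cast_le.2 (hmax x (mem_univ x))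
    _ ≤ K * #{w ∈ U | x₀ ∈ w} := by
        rw [← sum_mul]
        gcongr
        exact hc.sum_le

theorem exists_card_filter_disjoint_le {F : Finset (Finset α)}
    (hc : IsFractionalHittingSet (F : Set (Finset α)) K c) (t : ℕ) :
    ∃ H : Finset α, #H ≤ t ∧ (#{w ∈ F | Disjoint H w} : ℝ) ≤ Real.exp (-K⁻¹) ^ t * #F := by
  induction t with
  | zero => exact ⟨∅, by simp⟩
  | succ t ih =>
    obtain ⟨H, hHt, hH⟩ := ih
    set U : Finset (Finset α) := {w ∈ F | Disjoint H w} with hU_def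
    obtain hU | hU := U.eq_empty_or_nonempty
    · refine ⟨H, hHt.trans t.le_succ, ?_⟩
      rw [← hU_def, hU]
      simpa using by positivity
    obtain ⟨x, hx⟩ := exists_card_le_mul_card_filter_mem hU
      (hc.mono (coe_subset.2 (filter_subset _ F)) le_rfl)
    refine ⟨insert x H, (card_insert_le x H).trans (Nat.succ_le_succ hHt), ?_⟩
    have hfilter : ({w ∈ F | Disjoint (insert x H) w} : Finset _) = {w ∈ U | x ∉ w} := by
      simp only [hU_def, filter_filter, disjoint_insert_left, and_comm]
    have hsplit : (#{w ∈ U | x ∈ w} : ℝ) + #{w ∈ U | x ∉ w} = #U := by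
      exact_mod_cast card_filter_add_card_filter_not (s := U) (x ∈ ·)
    have hhit : K⁻¹ * #U ≤ (#{w ∈ U | x ∈ w} : ℝ) :=
      inv_mul_le_of_le_mul₀ hc.weight_nonneg (Nat.cast_nonneg _) hx
    calc (#{w ∈ F | Disjoint (insert x H) w} : ℝ) ≤ (1 - K⁻¹) * #U := by
          rw [hfilter]; linarith
      _ ≤ Real.exp (-K⁻¹) * (Real.exp (-K⁻¹) ^ t * #F) := by
          gcongr
          exact Real.one_sub_le_exp_neg _
      _ = Real.exp (-K⁻¹) ^ (t + 1) * #F := by ring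

theorem exists_hitting_card_le {F : Finset (Finset α)}
    (hc : IsFractionalHittingSet (F : Set (Finset α)) K c) :
    ∃ H : Finset α, (∀ w ∈ F, (H ∩ w).Nonempty) ∧ (#H : ℝ) ≤ K * Real.log #F + 1 := by
  obtain rfl | hF := F.eq_empty_or_nonempty
  · exact ⟨∅, by simp⟩
  have hK : 0 < K := one_pos.trans_le (hc.one_le_weight hF)
  have hF_pos : (0 : ℝ) < #F := Nat.cast_pos.2 hF.card_pos
  set t : ℕ := ⌊K * Real.log #F⌋₊ + 1 with ht
  obtain ⟨H, hHt, hH⟩ := hc.exists_card_filter_disjoint_le t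
  refine ⟨H, fun w hw ↦ ?_, ?_⟩
  · have hlog_lt : Real.log #F < t * K⁻¹ := by
      rw [← div_eq_mul_inv, lt_div_iff₀' hK, ht]
      exact_mod_cast Nat.lt_floor_add_one _
    have hlt : (#{w ∈ F | Disjoint H w} : ℝ) < 1 := calc
      _ ≤ Real.exp (-K⁻¹) ^ t * #F := hH
      _ = Real.exp (Real.log #F - t * K⁻¹) := by
          rw [← Real.exp_nat_mul, ← Real.exp_log hF_pos, ← Real.exp_add, Real.log_exp]
          ring_nf
      _ < 1 := Real.exp_lt_one_iff.2 (sub_neg.2 hlog_lt)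
    have hnone := card_eq_zero.1 (Nat.cast_lt_one.1 hlt)
    rw [← not_disjoint_iff_nonempty_inter]
    exact filter_eq_empty_iff.1 hnone hw
  · calc (#H : ℝ) ≤ t := Nat.cast_le.2 hHt
      _ ≤ K * Real.log #F + 1 := by
          rw [ht, Nat.cast_succ]
          gcongr
          exact Nat.floor_le (mul_nonneg hK.le (Real.log_natCast_nonneg _))

end IsFractionalHittingSet

end Greedy

section Overlap

variable {ι α : Type*} [DecidableEq α]

/-- The points lying in at least two of the sets `s i` with `i ∈ S`; removing them makes these sets
pairwise disjoint. -/
def overlap (S : Finset ι) (s : ι → Finset α) : Finset α :=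
  S.offDiag.biUnion fun e ↦ s e.1 ∩ s e.2

variable {S : Finset ι} {s : ι → Finset α}

theorem mem_overlap {x : α} :
    x ∈ overlap S s ↔ ∃ i ∈ S, ∃ j ∈ S, i ≠ j ∧ x ∈ s i ∧ x ∈ s j := by
  simp only [overlap, mem_biUnion, mem_offDiag, mem_inter, Prod.exists]
  grind

theorem pairwiseDisjoint_sdiff_overlap :
    (S : Set ι).PairwiseDisjoint fun i ↦ s i \ overlap S s := by
  refine fun i hi j hj hij ↦ disjoint_left.2 fun x hxi hxj ↦ (mem_sdiff.1 hxi).2 ?_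
  exact mem_overlap.2 ⟨i, hi, j, hj, hij, (mem_sdiff.1 hxi).1, (mem_sdiff.1 hxj).1⟩

theorem overlap_union_eq_union_overlap_erase [DecidableEq ι] (i : ι) :
    overlap S s ∪ s i = s i ∪ overlap (S.erase i) s := by
  ext x
  simp only [mem_union, mem_overlap, mem_erase]
  grind

theorem overlap_congr {t : ι → Finset α} (h : ∀ i ∈ S, s i = t i) : overlap S s = overlap S t := by
  refine biUnion_congr rfl fun e he ↦ ?_
  rw [h _ (mem_offDiag.1 he).1, h _ (mem_offDiag.1 he).2.1]

theorem sum_biUnion_le_sum_sum {M : Type*} [AddCommMonoid M] [PartialOrder M]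
    [IsOrderedAddMonoid M] {c : α → M} (hc : 0 ≤ c) :
    ∑ x ∈ S.biUnion s, c x ≤ ∑ i ∈ S, ∑ x ∈ s i, c x := by
  classical
  induction S using Finset.induction_on with
  | empty => simp
  | insert i S hi ih =>
    rw [biUnion_insert, sum_insert hi]
    calc ∑ x ∈ s i ∪ S.biUnion s, c x
        ≤ ∑ x ∈ s i ∪ S.biUnion s, c x + ∑ x ∈ s i ∩ S.biUnion s, c x :=
          le_add_of_nonneg_right (sum_nonneg fun x _ ↦ hc x)
      _ = ∑ x ∈ s i, c x + ∑ x ∈ S.biUnion s, c x := sum_union_inter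
      _ ≤ _ := by gcongr

end Overlap

section Sampling

variable {ι κ α : Type*} [Fintype ι] [DecidableEq ι] [Fintype κ] [Fintype α] [DecidableEq α]
  {p : κ → ℝ} {B : κ → Finset α} {δ : ℝ}

theorem iidWeight_dotProduct_sum_inter_le (hp : p ∈ stdSimplex ℝ κ)
    (hδ : ∀ x, p ⬝ᵥ (fun a ↦ if x ∈ B a then 1 else 0) ≤ δ) {i j : ι} (hij : i ≠ j)
    {c : α → ℝ} (hc : 0 ≤ c) :
    iidWeight p ⬝ᵥ (fun ω ↦ ∑ x ∈ B (ω i) ∩ B (ω j), c x) ≤ δ ^ 2 * ∑ x, c x := by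
  let hit (x : α) (a : κ) : ℝ := if x ∈ B a then 1 else 0
  have hhit_nonneg (x : α) : 0 ≤ p ⬝ᵥ hit x :=
    dotProduct_nonneg_of_nonneg hp.1 fun a ↦ by dsimp only [hit]; positivity
  have hmass (ω : ι → κ) :
      ∑ x ∈ B (ω i) ∩ B (ω j), c x = ∑ x, c x * (hit x (ω i) * hit x (ω j)) := by
    simp [hit, ← ite_and, ← mem_inter, inter_comm (B (ω j))]
  calc iidWeight p ⬝ᵥ (fun ω ↦ ∑ x ∈ B (ω i) ∩ B (ω j), c x)
      = ∑ x, c x * (iidWeight p ⬝ᵥ fun ω ↦ hit x (ω i) * hit x (ω j)) := by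
        simp only [hmass, dotProduct, mul_sum, mul_left_comm (c _)]
        exact sum_comm
    _ = ∑ x, c x * (p ⬝ᵥ hit x) ^ 2 := by
        simp only [iidWeight_dotProduct_mul_apply hp _ _ hij, sq]
    _ ≤ ∑ x, c x * δ ^ 2 := sum_le_sum fun x _ ↦
        mul_le_mul_of_nonneg_left (pow_le_pow_left₀ (hhit_nonneg x) (hδ x) 2) (hc x)
    _ = δ ^ 2 * ∑ x, c x := by rw [← sum_mul, mul_comm]

theorem iidWeight_dotProduct_sum_overlap_le (hp : p ∈ stdSimplex ℝ κ)
    (hδ : ∀ x, p ⬝ᵥ (fun a ↦ if x ∈ B a then 1 else 0) ≤ δ) (S : Finset ι)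
    {c : α → ℝ} (hc : 0 ≤ c) :
    iidWeight p ⬝ᵥ (fun ω ↦ ∑ x ∈ overlap S (B ∘ ω), c x)
      ≤ Fintype.card ι ^ 2 * (δ ^ 2 * ∑ x, c x) := by
  have hcard : (#S.offDiag : ℝ) ≤ Fintype.card ι ^ 2 := by
    rw [sq, ← Nat.cast_mul, ← Fintype.card_prod]
    exact Nat.cast_le.2 (card_le_univ _)
  calc iidWeight p ⬝ᵥ (fun ω ↦ ∑ x ∈ overlap S (B ∘ ω), c x)
      ≤ iidWeight p ⬝ᵥ (fun ω ↦ ∑ e ∈ S.offDiag, ∑ x ∈ B (ω e.1) ∩ B (ω e.2), c x) :=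
        dotProduct_le_dotProduct_of_nonneg_left (fun ω ↦ sum_biUnion_le_sum_sum hc)
          (iidWeight_mem_stdSimplex hp).1
    _ = ∑ e ∈ S.offDiag, iidWeight p ⬝ᵥ (fun ω ↦ ∑ x ∈ B (ω e.1) ∩ B (ω e.2), c x) := by
        simp only [dotProduct, mul_sum (s := S.offDiag)]
        exact sum_comm
    _ ≤ #S.offDiag • (δ ^ 2 * ∑ x, c x) := sum_le_card_nsmul _ _ _ fun e he ↦
        iidWeight_dotProduct_sum_inter_le hp hδ (mem_offDiag.1 he).2.2 hc
    _ ≤ Fintype.card ι ^ 2 * (δ ^ 2 * ∑ x, c x) := by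
        rw [nsmul_eq_mul]
        have := sum_nonneg fun x (_ : x ∈ univ) ↦ hc x
        gcongr

theorem iidWeight_dotProduct_sum_overlap_erase_le (hp : p ∈ stdSimplex ℝ κ)
    (hδ : ∀ x, p ⬝ᵥ (fun a ↦ if x ∈ B a then 1 else 0) ≤ δ) (S : Finset ι) (i : ι)
    {c : κ → α → ℝ} (hc : ∀ a, 0 ≤ c a) {T : ℝ} (hT : ∀ a, ∑ x, c a x ≤ T) :
    iidWeight p ⬝ᵥ (fun ω ↦ ∑ x ∈ overlap (S.erase i) (B ∘ ω), c (ω i) x)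
      ≤ Fintype.card ι ^ 2 * (δ ^ 2 * T) := by
  have hoverlap (ω : ι → κ) (a : κ) :
      overlap (S.erase i) (B ∘ Function.update ω i a) = overlap (S.erase i) (B ∘ ω) :=
    overlap_congr fun j hj ↦ by
      simp only [Function.comp_apply, Function.update_of_ne (mem_erase.1 hj).1]
  rw [iidWeight_dotProduct_resample hp i]
  simp only [Function.update_self, hoverlap]
  calc p ⬝ᵥ (fun a ↦ iidWeight p ⬝ᵥ fun ω ↦ ∑ x ∈ overlap (S.erase i) (B ∘ ω), c a x)
      ≤ p ⬝ᵥ (fun _ ↦ Fintype.card ι ^ 2 * (δ ^ 2 * T)) := by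
        refine dotProduct_le_dotProduct_of_nonneg_left (fun a ↦ ?_) hp.1
        refine (iidWeight_dotProduct_sum_overlap_le hp hδ _ (hc a)).trans ?_
        gcongr
        exact hT a
    _ = Fintype.card ι ^ 2 * (δ ^ 2 * T) := by rw [dotProduct, ← sum_mul, hp.2, one_mul]

theorem exists_sample_overlap_mass_le (hp : p ∈ stdSimplex ℝ κ)
    (hδ : ∀ x, p ⬝ᵥ (fun a ↦ if x ∈ B a then 1 else 0) ≤ δ) {T : ℝ}
    {c₀ : α → ℝ} (hc₀ : 0 ≤ c₀) (hT₀ : ∑ x, c₀ x ≤ T)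
    {c : κ → α → ℝ} (hc : ∀ a, 0 ≤ c a) (hT : ∀ a, ∑ x, c a x ≤ T) :
    ∃ ω : ι → κ, Fintype.card ι * ∑ x ∈ overlap univ (B ∘ ω), c₀ x
      + ∑ i, ∑ x ∈ overlap (univ.erase i) (B ∘ ω), c (ω i) x
      ≤ 2 * Fintype.card ι ^ 3 * (δ ^ 2 * T) := by
  let l : ℝ := Fintype.card ι
  let mass₀ (ω : ι → κ) : ℝ := ∑ x ∈ overlap univ (B ∘ ω), c₀ x
  let mass (i : ι) (ω : ι → κ) : ℝ := ∑ x ∈ overlap (univ.erase i) (B ∘ ω), c (ω i) x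
  have hmass₀ : iidWeight p ⬝ᵥ mass₀ ≤ l ^ 2 * (δ ^ 2 * T) :=
    (iidWeight_dotProduct_sum_overlap_le hp hδ _ hc₀).trans (by gcongr)
  have hmass (i : ι) : iidWeight p ⬝ᵥ mass i ≤ l ^ 2 * (δ ^ 2 * T) :=
    iidWeight_dotProduct_sum_overlap_erase_le hp hδ univ i hc hT
  refine exists_le_of_stdSimplex_dotProduct_le (iidWeight_mem_stdSimplex hp) ?_
  calc iidWeight p ⬝ᵥ (fun ω ↦ l * mass₀ ω + ∑ i, mass i ω)
      = l * (iidWeight p ⬝ᵥ mass₀) + ∑ i, iidWeight p ⬝ᵥ mass i := by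
        simp only [dotProduct, mul_add, sum_add_distrib, mul_sum, mul_left_comm l]
        rw [sum_comm (s := univ (α := ι))]
    _ ≤ l * (l ^ 2 * (δ ^ 2 * T)) + Fintype.card ι • (l ^ 2 * (δ ^ 2 * T)) := by
        gcongr
        exact sum_le_card_nsmul _ _ _ fun i _ ↦ hmass i
    _ = 2 * l ^ 3 * (δ ^ 2 * T) := by rw [nsmul_eq_mul]; ring

end Sampling

section MonotoneBlockSensitivity

variable {n m : ℕ} {f : Finset (Fin n) → ℝ} {z : Finset (Fin n)}

theorem nonempty_of_mem_W {w : Finset (Fin n)} (hw : w ∈ W f z) : w.Nonempty := by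
  rw [nonempty_iff_ne_empty]
  rintro rfl
  exact hw.2 (by rw [union_empty])

/-- `MBS(f) ≤ m`, expressed without the maximum: every family of pairwise disjoint members of some
`W(f,z)` has at most `m` elements. -/
def MonotoneBlockSensitivityLE (f : Finset (Fin n) → ℝ) (m : ℕ) : Prop :=
  ∀ (z : Finset (Fin n)) (k : ℕ) (w : Fin k → Finset (Fin n)),
    (∀ i, w i ∈ W f z) → (∀ i j, i ≠ j → Disjoint (w i) (w j)) → k ≤ m

theorem IsFractionalHittingSet.one_le_sum_of_apply_union_ne {K : ℝ} {c : Fin n → ℝ}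
    (hc : IsFractionalHittingSet (W f z) K c) {t : Finset (Fin n)} (ht : f (z ∪ t) ≠ f z) :
    1 ≤ ∑ x ∈ t, c x := by
  have hmem : t \ z ∈ W f z :=
    ⟨fun x hx ↦ mem_compl.2 (mem_sdiff.1 hx).2, by rwa [union_sdiff_self_eq_union]⟩
  exact (hc.one_le_sum _ hmem).trans
    (sum_le_sum_of_subset_of_nonneg sdiff_subset fun x _ _ ↦ hc.nonneg x)

namespace MonotoneBlockSensitivityLE

theorem card_le {ι : Type*} (hm : MonotoneBlockSensitivityLE f m) {I : Finset ι}
    {w : ι → Finset (Fin n)} (hw : ∀ i ∈ I, w i ∈ W f z)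
    (hdisj : (I : Set ι).PairwiseDisjoint w) : #I ≤ m :=
  hm z #I (fun a ↦ w (I.equivFin.symm a)) (fun a ↦ hw _ (I.equivFin.symm a).2) fun _ _ hab ↦
    hdisj (I.equivFin.symm _).2 (I.equivFin.symm _).2
      fun h ↦ hab (I.equivFin.symm.injective (Subtype.ext h))

theorem card_le_of_overlap {ι : Type*} [Fintype ι] [DecidableEq ι]
    (hm : MonotoneBlockSensitivityLE f m) {s : ι → Finset (Fin n)} (hs : ∀ i, s i ∈ W f z)
    (hoverlap : f (z ∪ overlap univ s) = f z) {I : Finset ι}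
    (hI : ∀ i ∈ I, f (z ∪ s i ∪ overlap (univ.erase i) s) = f (z ∪ s i)) : #I ≤ m := by
  refine hm.card_le (z := z ∪ overlap univ s) (w := fun i ↦ s i \ overlap univ s)
    (fun i hi ↦ ⟨?_, ?_⟩) (pairwiseDisjoint_sdiff_overlap.subset (subset_univ I))
  · rw [compl_union, ← sdiff_eq_inter_compl]
    exact sdiff_subset_sdiff (hs i).1 le_rfl
  · rw [union_assoc, union_sdiff_self_eq_union, overlap_union_eq_union_overlap_erase,
      ← union_assoc, hI i hi, hoverlap]
    exact (hs i).2

theorem card_le_add_sum_overlap {ι : Type*} [Fintype ι] [DecidableEq ι]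
    (hm : MonotoneBlockSensitivityLE f m) {K : ℝ} {c : Finset (Fin n) → Fin n → ℝ}
    (hc : ∀ y, IsFractionalHittingSet (W f y) K (c y)) {s : ι → Finset (Fin n)}
    (hs : ∀ i, s i ∈ W f z) (hoverlap : ∑ x ∈ overlap univ s, c z x < 1) :
    (Fintype.card ι : ℝ) ≤ m + ∑ i, ∑ x ∈ overlap (univ.erase i) s, c (z ∪ s i) x := by
  let bad : Finset ι := {i | f (z ∪ s i ∪ overlap (univ.erase i) s) ≠ f (z ∪ s i)}
  have hoverlap_eq : f (z ∪ overlap univ s) = f z := by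
    by_contra hne
    exact hoverlap.not_ge ((hc z).one_le_sum_of_apply_union_ne hne)
  have hgood : #badᶜ ≤ m := hm.card_le_of_overlap hs hoverlap_eq fun i hi ↦ by
    simpa [bad] using hi
  have hbad : (#bad : ℝ) ≤ ∑ i, ∑ x ∈ overlap (univ.erase i) s, c (z ∪ s i) x := calc
    (#bad : ℝ) = ∑ i ∈ bad, 1 := by simp
    _ ≤ ∑ i ∈ bad, ∑ x ∈ overlap (univ.erase i) s, c (z ∪ s i) x := sum_le_sum fun i hi ↦
      (hc _).one_le_sum_of_apply_union_ne (mem_filter.1 hi).2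
    _ ≤ ∑ i, ∑ x ∈ overlap (univ.erase i) s, c (z ∪ s i) x :=
      sum_le_univ_sum_of_nonneg fun i ↦ sum_nonneg fun x _ ↦ (hc _).nonneg x
  calc (Fintype.card ι : ℝ) = #badᶜ + #bad := by exact_mod_cast (card_compl_add_card bad).symm
    _ ≤ m + ∑ i, ∑ x ∈ overlap (univ.erase i) s, c (z ∪ s i) x :=
      add_le_add (Nat.cast_le.2 hgood) hbad

theorem exists_isFractionalHittingSet_of_two_mul (hm : MonotoneBlockSensitivityLE f m) {K : ℝ}
    (hK : 32 * (m + 1 : ℝ) ^ 2 ≤ K) (h : ∀ y, ∃ c, IsFractionalHittingSet (W f y) (2 * K) c)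
    (z : Finset (Fin n)) : ∃ c, IsFractionalHittingSet (W f z) K c := by
  classical
  by_contra! hz
  let _ := Fintype.ofFinite (W f z)
  choose c hc using h
  have hK_pos : 0 < K := lt_of_lt_of_le (by positivity) hK
  obtain ⟨p, hp, hpK⟩ := exists_stdSimplex_of_forall_not_isFractionalHittingSet hK_pos hz
  obtain ⟨ω, hω⟩ := exists_sample_overlap_mass_le (ι := Fin (2 * (m + 1))) hp hpK
    (hc z).nonneg (hc z).sum_le
    (c := fun w ↦ c (z ∪ w.1)) (fun w ↦ (hc _).nonneg) (fun w ↦ (hc _).sum_le)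
  let s (i : Fin (2 * (m + 1))) : Finset (Fin n) := ω i
  obtain ⟨mass₀, hmass₀⟩ : ∃ a, a = ∑ x ∈ overlap univ s, c z x := ⟨_, rfl⟩
  obtain ⟨mass, hmass⟩ : ∃ a, a = ∑ i, ∑ x ∈ overlap (univ.erase i) s, c (z ∪ s i) x := ⟨_, rfl⟩
  have htotal : 2 * (m + 1) * mass₀ + mass ≤ m + 1 := calc
    2 * (m + 1) * mass₀ + mass ≤ 2 * (2 * (m + 1)) ^ 3 * (K⁻¹ ^ 2 * (2 * K)) := by
      rw [Fintype.card_fin] at hω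
      rw [hmass₀, hmass]
      exact_mod_cast hω
    _ = (m + 1) * (32 * (m + 1) ^ 2) / K := by field_simp; ring
    _ ≤ m + 1 := by
      rw [div_le_iff₀ hK_pos]
      gcongr
  have hmass_nonneg : 0 ≤ mass :=
    hmass ▸ sum_nonneg fun i _ ↦ sum_nonneg fun x _ ↦ (hc _).nonneg x
  have hmass₀_nonneg : 0 ≤ mass₀ := hmass₀ ▸ sum_nonneg fun x _ ↦ (hc z).nonneg x
  have hmass₀_lt : mass₀ < 1 := by nlinarith
  have hcard : ((2 * (m + 1) : ℕ) : ℝ) ≤ m + mass := by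
    simpa only [hmass, Fintype.card_fin] using
      hm.card_le_add_sum_overlap hc (s := s) (fun i ↦ (ω i).2) (hmass₀ ▸ hmass₀_lt)
  push_cast at hcard
  nlinarith

theorem exists_isFractionalHittingSet (hm : MonotoneBlockSensitivityLE f m)
    (z : Finset (Fin n)) : ∃ c, IsFractionalHittingSet (W f z) (32 * (m + 1) ^ 2) c := by
  have halve (k : ℕ) (h : ∀ y, ∃ c, IsFractionalHittingSet (W f y) (2 ^ k * (32 * (m + 1) ^ 2)) c)
      (y : Finset (Fin n)) : ∃ c, IsFractionalHittingSet (W f y) (32 * (m + 1) ^ 2) c := by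
    induction k with
    | zero => simpa using h y
    | succ k ih =>
      refine ih (hm.exists_isFractionalHittingSet_of_two_mul ?_ fun y ↦ ?_)
      · exact le_mul_of_one_le_left (by positivity) (one_le_pow₀ one_le_two)
      · rw [← mul_assoc, ← pow_succ']
        exact h y
  refine halve n (fun y ↦ ⟨1, ?_⟩) z
  refine (isFractionalHittingSet_one fun w ↦ nonempty_of_mem_W).mono subset_rfl ?_
  have hn : (n : ℝ) ≤ 2 ^ n := by exact_mod_cast n.lt_two_pow_self.le
  rw [Fintype.card_fin]
  exact hn.trans (le_mul_of_one_le_right (by positivity) (by nlinarith [m.cast_nonneg (α := ℝ)]))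

end MonotoneBlockSensitivityLE

theorem IsFractionalHittingSet.exists_hitting_W_card_le {K : ℝ} {c : Fin n → ℝ}
    (hc : IsFractionalHittingSet (W f z) K c) :
    ∃ H : Finset (Fin n), (∀ w ∈ W f z, (H ∩ w).Nonempty) ∧
      (#H : ℝ) ≤ K * Real.log (sparsity f) + 1 := by
  classical
  let supp : Finset (Finset (Fin n)) := {s | coeff f s ≠ 0}
  let F : Finset (Finset (Fin n)) := {w ∈ supp.image (· \ z) | w ∈ W f z}
  have hF : #F ≤ sparsity f := calc
    #F ≤ #supp := (card_filter_le _ _).trans card_image_le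
    _ = sparsity f := by rw [sparsity, ← Set.ncard_coe_finset, coe_filter_univ]
  have hcF : IsFractionalHittingSet (F : Set (Finset (Fin n))) K c :=
    hc.mono (fun w hw ↦ (mem_filter.1 hw).2) le_rfl
  obtain ⟨H, hH, hcard⟩ := hcF.exists_hitting_card_le
  refine ⟨H, fun w hw ↦ ?_, hcard.trans ?_⟩
  · obtain ⟨s, hs, hsw, hsW⟩ := exists_coeff_ne_zero_sdiff_mem_W hw
    have hsF : s \ z ∈ F := mem_filter.2 ⟨mem_image_of_mem _ (by simpa [supp] using hs), hsW⟩
    exact (hH _ hsF).mono (inter_subset_inter_left hsw)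
  · have hlog : Real.log #F ≤ Real.log (sparsity f) := by
      obtain hzero | hpos := (#F).eq_zero_or_pos
      · simpa [hzero] using Real.log_natCast_nonneg (sparsity f)
      · gcongr
    have := hc.weight_nonneg
    gcongr

theorem log_le_logb_two {x : ℝ} (hx : 1 ≤ x) : Real.log x ≤ Real.logb 2 x :=
  le_div_self (Real.log_nonneg hx) (Real.log_pos one_lt_two)
    (Real.log_two_lt_d9.le.trans (by norm_num))

end MonotoneBlockSensitivity

/-- For real-valued `f` with sparsity `r ≥ 2` and monotone block sensitivity at most `m`,
every `W(f,z)` has a hitting set of size `≤ C·m²·log₂ r`, i.e. `HSC(f) = O(m²·log r)`. -/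
theorem stmt2 :
    ∃ C : ℝ, 0 < C ∧
      ∀ (n m : ℕ) (f : Finset (Fin n) → ℝ),
        2 ≤ sparsity f →
        -- MBS(f) ≤ m: any pairwise disjoint collection in some W(f,z) has size ≤ m
        (∀ (z : Finset (Fin n)) (k : ℕ) (w : Fin k → Finset (Fin n)),
          (∀ i, w i ∈ W f z) → (∀ i j, i ≠ j → Disjoint (w i) (w j)) → k ≤ m) →
        ∀ z : Finset (Fin n),
          ∃ H : Finset (Fin n),
            (∀ w ∈ W f z, (H ∩ w).Nonempty) ∧
            (H.card : ℝ) ≤ C * (m : ℝ) ^ 2 * Real.logb 2 (sparsity f) := by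
  refine ⟨129, by norm_num, fun n m f hr (hm : MonotoneBlockSensitivityLE f m) z ↦ ?_⟩
  have hr' : (2 : ℝ) ≤ sparsity f := by exact_mod_cast hr
  have hlogb : 1 ≤ Real.logb 2 (sparsity f) := by
    rwa [Real.le_logb_iff_rpow_le one_lt_two (by linarith), Real.rpow_one]
  obtain hW | ⟨w, hw⟩ := (W f z).eq_empty_or_nonempty
  · refine ⟨∅, by simp [hW], ?_⟩
    rw [Finset.card_empty, Nat.cast_zero]
    positivity
  have hm_pos : (1 : ℝ) ≤ m := by
    exact_mod_cast hm.card_le (I := {()}) (w := fun _ ↦ w) (fun _ _ ↦ hw) (by simp)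
  obtain ⟨c, hc⟩ := hm.exists_isFractionalHittingSet z
  obtain ⟨H, hH, hcard⟩ := hc.exists_hitting_W_card_le
  refine ⟨H, hH, hcard.trans ?_⟩
  have hlog := log_le_logb_two (one_le_two.trans hr')
  have hweight : 32 * (m + 1 : ℝ) ^ 2 ≤ 128 * m ^ 2 := by nlinarith
  calc 32 * (m + 1 : ℝ) ^ 2 * Real.log (sparsity f) + 1
      ≤ 128 * m ^ 2 * Real.logb 2 (sparsity f) + m ^ 2 * Real.logb 2 (sparsity f) :=
        add_le_add (mul_le_mul hweight hlog (Real.log_natCast_nonneg _) (by positivity))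
          (one_le_mul_of_one_le_of_one_le (one_le_pow₀ hm_pos) hlogb)
    _ = 129 * m ^ 2 * Real.logb 2 (sparsity f) := by ring
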